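/- If f: X → Y is a continuous Max-Plus affine map between Max-Plus convex compacta, then the barycenter diagram commutes: f ∘ β_X = β_Y ∘ If, i.e., f(β_X(μ)) = β_Y(If(μ)) for every idempotent measure μ on X. -/

import Mathlib

/-!
Compactness gives, for every `φ`, a point `x` such that the Dirac measure at `x` shifted by
`μ φ - φ x` lies below `μ`, with equality at `φ`. Max-Plus combinations of such points agree with
`μ` on any finite set of Max-Plus affine functions while staying below `μ` on all the others, so by
compactness a single point agrees with `μ` on all of them. Its coordinates identify it as the
barycenter; on the coordinates of `f`, the same agreement is naturality.
-/

open Topology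

noncomputable section

def IsIdempotentMeasure {Z : Type*} [TopologicalSpace Z] (μ : C(Z, ℝ) → ℝ) : Prop :=
  μ 1 = 1 ∧ (∀ (c : ℝ) (φ : C(Z, ℝ)), μ (ContinuousMap.const Z c + φ) = c + μ φ) ∧
    ∀ φ ψ : C(Z, ℝ), μ (φ ⊔ ψ) = max (μ φ) (μ ψ)

abbrev IM (Z : Type*) [TopologicalSpace Z] : Type _ :=
  {μ : C(Z, ℝ) → ℝ // IsIdempotentMeasure μ}

def density {Z : Type*} [TopologicalSpace Z] (μ : C(Z, ℝ) → ℝ) (z : Z) : EReal :=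
  ⨅ φ : {φ : C(Z, ℝ) // φ ≤ 0 ∧ φ z = 0}, ((μ φ.1 : ℝ) : EReal)

def pushforward {X Y : Type*} [TopologicalSpace X] [TopologicalSpace Y]
    (f : C(X, Y)) (μ : C(X, ℝ) → ℝ) : C(Y, ℝ) → ℝ :=
  fun ψ => μ (ψ.comp f)

def mpComb {τ : Type*} (α : EReal) (a b : τ → ℝ) : τ → ℝ :=
  fun t => ((α + (a t : EReal)) ⊔ ((b t : ℝ) : EReal)).toReal

def MaxPlusConvex {τ : Type*} (A : Set (τ → ℝ)) : Prop :=
  ∀ a ∈ A, ∀ b ∈ A, ∀ α : EReal, α ≤ 0 → mpComb α a b ∈ A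

def projCM {T : Type*} (A : Set (T → ℝ)) (t : T) : C(A, ℝ) :=
  ⟨fun a => a.1 t, (continuous_apply t).comp continuous_subtype_val⟩

def tilde {Z : Type*} [TopologicalSpace Z] (φ : C(Z, ℝ)) : C(IM Z, ℝ) :=
  ⟨fun ν => ν.1 φ, (continuous_apply φ).comp continuous_subtype_val⟩

namespace IsIdempotentMeasure

variable {Z : Type*} [TopologicalSpace Z] {μ : C(Z, ℝ) → ℝ}

theorem map_const_add (hμ : IsIdempotentMeasure μ) (c : ℝ) (φ : C(Z, ℝ)) :
    μ (ContinuousMap.const Z c + φ) = c + μ φ :=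
  hμ.2.1 c φ

theorem map_sup (hμ : IsIdempotentMeasure μ) (φ ψ : C(Z, ℝ)) : μ (φ ⊔ ψ) = max (μ φ) (μ ψ) :=
  hμ.2.2 φ ψ

theorem map_zero (hμ : IsIdempotentMeasure μ) : μ 0 = 0 := by
  have h : μ 1 = 1 + μ 0 := hμ.map_const_add 1 0 ▸ congrArg μ (add_zero 1).symm
  linarith [hμ.1]

theorem monotone (hμ : IsIdempotentMeasure μ) : Monotone μ := fun φ ψ h =>
  calc μ φ ≤ max (μ φ) (μ ψ) := le_max_left _ _
    _ = μ ψ := by rw [← hμ.map_sup, sup_eq_right.mpr h]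

theorem nonempty (hμ : IsIdempotentMeasure μ) : Nonempty Z := by
  by_contra hZ
  rw [not_nonempty_iff] at hZ
  have h : μ 1 = μ 0 := congrArg μ (Subsingleton.elim _ _)
  rw [hμ.1, hμ.map_zero] at h
  exact one_ne_zero h

theorem exists_sub_le_sub [CompactSpace Z] (hμ : IsIdempotentMeasure μ) (φ ψ : C(Z, ℝ)) :
    ∃ x, ψ x - φ x ≤ μ ψ - μ φ := by
  have := hμ.nonempty
  obtain ⟨x, -, hx⟩ := isCompact_univ.exists_isMinOn Set.univ_nonempty
    (ψ - φ).continuous.continuousOn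
  have hle : ContinuousMap.const Z (ψ x - φ x) + φ ≤ ψ := fun y =>
    le_sub_iff_add_le.mp (hx (Set.mem_univ y))
  refine ⟨x, le_sub_iff_add_le.mpr ?_⟩
  rw [← hμ.map_const_add]
  exact hμ.monotone hle

/- Equivalently, the supremum in `μ φ = ⨆ x, density μ x + φ x` is attained. -/
theorem exists_forall_sub_le_sub [CompactSpace Z] (hμ : IsIdempotentMeasure μ) (φ : C(Z, ℝ)) :
    ∃ x, ∀ ψ, μ φ - φ x ≤ μ ψ - ψ x := by
  let K (ψ : {ψ : C(Z, ℝ) // μ ψ ≤ 0}) : Set Z := {x | ψ.1 x ≤ φ x - μ φ}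
  have K_closed (ψ) : IsClosed (K ψ) := isClosed_le (by fun_prop) (by fun_prop)
  have K_nonempty (ψ) : (K ψ).Nonempty := by
    obtain ⟨x, hx⟩ := hμ.exists_sub_le_sub φ ψ.1
    exact ⟨x, show ψ.1 x ≤ φ x - μ φ by linarith [ψ.2]⟩
  have K_directed : Directed (· ⊇ ·) K := fun ψ₁ ψ₂ =>
    ⟨⟨ψ₁.1 ⊔ ψ₂.1, (hμ.map_sup _ _).trans_le (max_le ψ₁.2 ψ₂.2)⟩,
      fun x => (le_max_left (ψ₁.1 x) (ψ₂.1 x)).trans,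
      fun x => (le_max_right (ψ₁.1 x) (ψ₂.1 x)).trans⟩
  have : Nonempty {ψ : C(Z, ℝ) // μ ψ ≤ 0} := ⟨⟨0, hμ.map_zero.le⟩⟩
  obtain ⟨x, hx⟩ := IsCompact.nonempty_iInter_of_directed_nonempty_isCompact_isClosed K
    K_directed K_nonempty (fun ψ => (K_closed ψ).isCompact) K_closed
  refine ⟨x, fun ψ => ?_⟩
  have hnorm : μ (ContinuousMap.const Z (-μ ψ) + ψ) ≤ 0 := by
    rw [hμ.map_const_add, neg_add_cancel]
  have hψ : -μ ψ + ψ x ≤ φ x - μ φ := Set.mem_iInter.mp hx ⟨_, hnorm⟩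
  linarith

end IsIdempotentMeasure

/-- A family of continuous functions is Max-Plus convex-like (after Ky Fan's convex-like families)
if, for any two points and any weight `d ≤ 0`, some point is their Max-Plus combination as seen by
the whole family. This is all that is needed of Max-Plus affine functions on a Max-Plus convex set;
real weights suffice, since weight `-∞` gives back the point `y`. -/
def MaxPlusConvexLike {Z ι : Type*} [TopologicalSpace Z] (φ : ι → C(Z, ℝ)) : Prop :=
  ∀ x y, ∀ d : ℝ, d ≤ 0 → ∃ z, ∀ i, φ i z = max (d + φ i x) (φ i y)

namespace MaxPlusConvexLike

variable {Z ι : Type*} [TopologicalSpace Z] [CompactSpace Z] {μ : C(Z, ℝ) → ℝ} {φ : ι → C(Z, ℝ)}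

theorem exists_le_and_eq_on_finset (hφ : MaxPlusConvexLike φ)
    (hμ : IsIdempotentMeasure μ) (I : Finset ι) :
    ∃ x, (∀ i, φ i x ≤ μ (φ i)) ∧ ∀ i ∈ I, φ i x = μ (φ i) := by
  classical
  induction I using Finset.induction_on with
  | empty =>
    obtain ⟨x, hx⟩ := hμ.exists_forall_sub_le_sub 0
    simp only [hμ.map_zero, ContinuousMap.zero_apply, sub_zero, sub_nonneg] at hx
    exact ⟨x, fun i => hx (φ i), by simp⟩
  | insert i₀ I _ ih =>
    obtain ⟨x, x_le, x_eq⟩ := ih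
    obtain ⟨y, hy⟩ := hμ.exists_forall_sub_le_sub (φ i₀)
    set d : ℝ := μ (φ i₀) - φ i₀ y with hd
    have d_nonpos : d ≤ 0 := by simpa [hμ.map_zero] using hy 0
    have y_le (i : ι) : d + φ i y ≤ μ (φ i) := le_sub_iff_add_le.mp (hy (φ i))
    obtain ⟨z, hz⟩ := hφ y x d d_nonpos
    refine ⟨z, fun i => (hz i).trans_le (max_le (y_le i) (x_le i)), fun i hi => ?_⟩
    rw [hz]
    rcases Finset.mem_insert.mp hi with rfl | hi
    · rw [hd, sub_add_cancel, max_eq_left (x_le i)]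
    · rw [x_eq i hi, max_eq_right (y_le i)]

theorem exists_forall_eq (hφ : MaxPlusConvexLike φ) (hμ : IsIdempotentMeasure μ) :
    ∃ x, ∀ i, φ i x = μ (φ i) := by
  obtain ⟨x, hx⟩ := CompactSpace.iInter_nonempty (t := fun i => {x | φ i x = μ (φ i)})
    (fun i => isClosed_eq (φ i).continuous continuous_const) fun I =>
      let ⟨x, _, hx⟩ := hφ.exists_le_and_eq_on_finset hμ I
      ⟨x, Set.mem_iInter₂.mpr hx⟩
  exact ⟨x, Set.mem_iInter.mp hx⟩

end MaxPlusConvexLike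

theorem mpComb_coe_apply {τ : Type*} (d : ℝ) (a b : τ → ℝ) (t : τ) :
    mpComb d a b t = max (d + a t) (b t) := by
  rw [mpComb, ← EReal.coe_add, ← EReal.coe_strictMono.monotone.map_max, EReal.toReal_coe]

theorem maxPlusConvexLike_projCM_sumElim {S T : Type*} {X : Set (S → ℝ)} {Y : Set (T → ℝ)}
    (hXc : MaxPlusConvex X) {f : C(X, Y)}
    (haff : ∀ (a b : X) (α : EReal), α ≤ 0 → ∀ h : mpComb α a.1 b.1 ∈ X,
      ((f ⟨mpComb α a.1 b.1, h⟩ : Y) : T → ℝ) =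
        mpComb α ((f a : Y) : T → ℝ) ((f b : Y) : T → ℝ)) :
    MaxPlusConvexLike (Sum.elim (projCM X) fun t => (projCM Y t).comp f) := by
  intro x y d hd
  have hd' : (d : EReal) ≤ 0 := EReal.coe_nonpos.mpr hd
  have hz : mpComb d x.1 y.1 ∈ X := hXc x.1 x.2 y.1 y.2 d hd'
  refine ⟨⟨mpComb d x.1 y.1, hz⟩, ?_⟩
  rintro (s | t)
  · exact mpComb_coe_apply d x.1 y.1 s
  · exact (congrFun (haff x y d hd' hz) t).trans (mpComb_coe_apply d (f x).1 (f y).1 t)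

theorem barycenter_natural_affine_general {S T : Type*} (X : Set (S → ℝ)) (Y : Set (T → ℝ))
    (hX : IsCompact X) (hXc : MaxPlusConvex X) (f : C(X, Y))
    (haff : ∀ (a b : X) (α : EReal), α ≤ 0 → ∀ h : mpComb α a.1 b.1 ∈ X,
      ((f ⟨mpComb α a.1 b.1, h⟩ : Y) : T → ℝ) =
        mpComb α ((f a : Y) : T → ℝ) ((f b : Y) : T → ℝ))
    (μ : C(X, ℝ) → ℝ) (hμ : IsIdempotentMeasure μ) :
    ∃ hmem : (fun s => μ (projCM X s)) ∈ X,
      ((f ⟨fun s => μ (projCM X s), hmem⟩ : Y) : T → ℝ) =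
        fun t => pushforward f μ (projCM Y t) := by
  have : CompactSpace X := isCompact_iff_compactSpace.mp hX
  obtain ⟨x, hx⟩ := (maxPlusConvexLike_projCM_sumElim hXc haff).exists_forall_eq hμ
  have x_eq : x.1 = fun s => μ (projCM X s) := funext fun s => hx (.inl s)
  have fx_eq : (f x : T → ℝ) = fun t => pushforward f μ (projCM Y t) :=
    funext fun t => hx (.inr t)
  have hmem : (fun s => μ (projCM X s)) ∈ X := x_eq ▸ x.2
  obtain rfl : x = ⟨_, hmem⟩ := Subtype.ext x_eq
  exact ⟨hmem, fx_eq⟩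

theorem barycenter_natural_affine {S T : Type*} (X : Set (S → ℝ)) (Y : Set (T → ℝ))
    (hX : IsCompact X) (hY : IsCompact Y) (hXc : MaxPlusConvex X) (hYc : MaxPlusConvex Y)
    (f : C(X, Y))
    (haff : ∀ (a b : X) (α : EReal), α ≤ 0 → ∀ h : mpComb α a.1 b.1 ∈ X,
      ((f ⟨mpComb α a.1 b.1, h⟩ : Y) : T → ℝ) =
        mpComb α ((f a : Y) : T → ℝ) ((f b : Y) : T → ℝ))
    (μ : C(X, ℝ) → ℝ) (hμ : IsIdempotentMeasure μ)
    (hmem : (fun s => μ (projCM X s)) ∈ X) :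
    ((f ⟨fun s => μ (projCM X s), hmem⟩ : Y) : T → ℝ) =
      fun t => pushforward f μ (projCM Y t) := by
  obtain ⟨_, h⟩ := barycenter_natural_affine_general X Y hX hXc f haff μ hμ
  exact h
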